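/- arXiv:1001.4954 — 8 statements merged into one kernel-verified Lean document; each statement's English description precedes it below -/
import Mathlib

section
/- Let n ≥ 3 be an integer and let a, b be integers with 1 ≤ a ≤ b. Define the sequence of integer pairs (a_0, b_0) = (a, b) and (a_{i+1}, b_{i+1}) = (n·b_i − a_i, (n²−1)·b_i − n·a_i) for i ≥ 0 (i.e., (a_i, b_i) = (a,b)·(Φ⁻¹)^i). Then for every i ≥ 1: (1) a < a_i and b < b_i; (2) a_i < b_i; and (3) for every r ≥ 0, the componentwise sum satisfies Σ_{i=0}^{r} a_i < a_{r+1} and Σ_{i=0}^{r} b_i < b_{r+1}. -/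
/-!
Interleaving the two coordinates as `a₀, b₀, a₁, b₁, …` gives a single sequence `c` with
`c_{k+2} = n c_{k+1} - c_k`. If `0 ≤ c_{k+1}` and `c_k ≤ c_{k+1}`, then `3 ≤ n` gives
`2 c_{k+1} ≤ c_{k+2}`. Since `0 ≤ b₀` and `2 a₀ < n b₀` force both `a₀ < a₁` and `b₀ < a₁`, the
sequence `c` at least doubles at every step from `a₁` on, and a sequence that doubles dominates the
sum of its earlier terms.
-/

theorem sum_range_succ_lt_of_two_nsmul_le {M : Type*} [AddCommMonoid M] [PartialOrder M]
    [IsOrderedCancelAddMonoid M] {f : ℕ → M} (h_lt : f 0 < f 1)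
    (h_double : ∀ i, 2 • f (i + 1) ≤ f (i + 2)) (r : ℕ) :
    ∑ i ∈ Finset.range (r + 1), f i < f (r + 1) := by
  induction r with
  | zero => simpa using h_lt
  | succ r ih =>
    calc ∑ i ∈ Finset.range (r + 2), f i
        = ∑ i ∈ Finset.range (r + 1), f i + f (r + 1) := Finset.sum_range_succ f (r + 1)
      _ < f (r + 1) + f (r + 1) := by gcongr
      _ = 2 • f (r + 1) := (two_nsmul _).symm
      _ ≤ f (r + 2) := h_double r

/-- The pairs `(A i, B i)` form an orbit of the inverse Coxeter matrix
`Φ⁻¹ = [[-1, -n], [n, n² - 1]]` of the `n`-Kronecker quiver, acting on row vectors from the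
right. -/
def IsInverseCoxeterOrbit {R : Type*} [Ring R] (n : R) (A B : ℕ → R) : Prop :=
  ∀ i, A (i + 1) = n * B i - A i ∧ B (i + 1) = (n ^ 2 - 1) * B i - n * A i

theorem IsInverseCoxeterOrbit.snd_succ_eq {R : Type*} [Ring R] {n : R} {A B : ℕ → R}
    (h : IsInverseCoxeterOrbit n A B) (i : ℕ) : B (i + 1) = n * A (i + 1) - B i := by
  rw [(h i).1, (h i).2]
  noncomm_ring

section Ordered

variable {R : Type*} [CommRing R] [LinearOrder R] [IsStrictOrderedRing R] {n : R}

theorem two_mul_le_mul_sub {x y : R} (hn : 3 ≤ n) (hy : 0 ≤ y) (hxy : x ≤ y) :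
    2 * y ≤ n * y - x := by
  linarith [mul_le_mul_of_nonneg_right hn hy]

namespace IsInverseCoxeterOrbit

variable {A B : ℕ → R}

theorem snd_nonneg_and_lt_fst_succ (h : IsInverseCoxeterOrbit n A B) (hn : 3 ≤ n)
    (hB : 0 ≤ B 0) (hAB : 2 * A 0 < n * B 0) (i : ℕ) : 0 ≤ B i ∧ B i < A (i + 1) := by
  induction i with
  | zero =>
    have h_mul : 3 * B 0 ≤ n * B 0 := mul_le_mul_of_nonneg_right hn hB
    exact ⟨hB, by linarith [(h 0).1]⟩
  | succ i ih =>
    obtain ⟨hB_nonneg, hBA⟩ := ih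
    have hA_pos : 0 < A (i + 1) := hB_nonneg.trans_lt hBA
    have h_snd : 2 * A (i + 1) ≤ B (i + 1) :=
      h.snd_succ_eq i ▸ two_mul_le_mul_sub hn hA_pos.le hBA.le
    have h_fst : 2 * B (i + 1) ≤ A (i + 2) :=
      (h (i + 1)).1 ▸ two_mul_le_mul_sub hn (by linarith) (by linarith)
    constructor <;> linarith

theorem snd_lt_fst_succ (h : IsInverseCoxeterOrbit n A B) (hn : 3 ≤ n)
    (hB : 0 ≤ B 0) (hAB : 2 * A 0 < n * B 0) (i : ℕ) : B i < A (i + 1) :=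
  (h.snd_nonneg_and_lt_fst_succ hn hB hAB i).2

theorem fst_succ_pos (h : IsInverseCoxeterOrbit n A B) (hn : 3 ≤ n)
    (hB : 0 ≤ B 0) (hAB : 2 * A 0 < n * B 0) (i : ℕ) : 0 < A (i + 1) :=
  have ⟨hB_nonneg, hBA⟩ := h.snd_nonneg_and_lt_fst_succ hn hB hAB i
  hB_nonneg.trans_lt hBA

theorem two_mul_fst_succ_le_snd_succ (h : IsInverseCoxeterOrbit n A B) (hn : 3 ≤ n)
    (hB : 0 ≤ B 0) (hAB : 2 * A 0 < n * B 0) (i : ℕ) : 2 * A (i + 1) ≤ B (i + 1) :=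
  h.snd_succ_eq i ▸
    two_mul_le_mul_sub hn (h.fst_succ_pos hn hB hAB i).le (h.snd_lt_fst_succ hn hB hAB i).le

theorem fst_succ_lt_snd_succ (h : IsInverseCoxeterOrbit n A B) (hn : 3 ≤ n)
    (hB : 0 ≤ B 0) (hAB : 2 * A 0 < n * B 0) (i : ℕ) : A (i + 1) < B (i + 1) := by
  linarith [h.fst_succ_pos hn hB hAB i, h.two_mul_fst_succ_le_snd_succ hn hB hAB i]

theorem strictMono_fst (h : IsInverseCoxeterOrbit n A B) (hn : 3 ≤ n)
    (hB : 0 ≤ B 0) (hAB : 2 * A 0 < n * B 0) : StrictMono A := by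
  refine strictMono_nat_of_lt_succ fun i => ?_
  cases i with
  | zero => linarith [(h 0).1]
  | succ i => exact (h.fst_succ_lt_snd_succ hn hB hAB i).trans (h.snd_lt_fst_succ hn hB hAB (i + 1))

theorem strictMono_snd (h : IsInverseCoxeterOrbit n A B) (hn : 3 ≤ n)
    (hB : 0 ≤ B 0) (hAB : 2 * A 0 < n * B 0) : StrictMono B :=
  strictMono_nat_of_lt_succ fun i =>
    (h.snd_lt_fst_succ hn hB hAB i).trans (h.fst_succ_lt_snd_succ hn hB hAB i)

theorem sum_fst_lt (h : IsInverseCoxeterOrbit n A B) (hn : 3 ≤ n)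
    (hB : 0 ≤ B 0) (hAB : 2 * A 0 < n * B 0) (r : ℕ) :
    ∑ i ∈ Finset.range (r + 1), A i < A (r + 1) := by
  refine sum_range_succ_lt_of_two_nsmul_le (h.strictMono_fst hn hB hAB one_pos) (fun i => ?_) r
  calc 2 • A (i + 1)
      = 2 * A (i + 1) := by rw [two_nsmul, two_mul]
    _ ≤ B (i + 1) := h.two_mul_fst_succ_le_snd_succ hn hB hAB i
    _ ≤ A (i + 2) := (h.snd_lt_fst_succ hn hB hAB (i + 1)).le

theorem sum_snd_lt (h : IsInverseCoxeterOrbit n A B) (hn : 3 ≤ n)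
    (hB : 0 ≤ B 0) (hAB : 2 * A 0 < n * B 0) (r : ℕ) :
    ∑ i ∈ Finset.range (r + 1), B i < B (r + 1) := by
  refine sum_range_succ_lt_of_two_nsmul_le (h.strictMono_snd hn hB hAB one_pos) (fun i => ?_) r
  calc 2 • B (i + 1)
      ≤ 2 • A (i + 2) := nsmul_le_nsmul_right (h.snd_lt_fst_succ hn hB hAB (i + 1)).le 2
    _ = 2 * A (i + 2) := by rw [two_nsmul, two_mul]
    _ ≤ B (i + 2) := h.two_mul_fst_succ_le_snd_succ hn hB hAB (i + 1)

end IsInverseCoxeterOrbit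

theorem stmt0_general {A B : ℕ → R} (hn : 3 ≤ n) (hB : 0 ≤ B 0) (hAB : 2 * A 0 < n * B 0)
    (h : IsInverseCoxeterOrbit n A B) :
    (∀ i, 1 ≤ i → A 0 < A i ∧ B 0 < B i) ∧
    (∀ i, 1 ≤ i → A i < B i) ∧
    (∀ r, ∑ i ∈ Finset.range (r + 1), A i < A (r + 1) ∧
      ∑ i ∈ Finset.range (r + 1), B i < B (r + 1)) := by
  refine ⟨fun i hi => ⟨h.strictMono_fst hn hB hAB hi, h.strictMono_snd hn hB hAB hi⟩,
    fun i hi => ?_, fun r => ⟨h.sum_fst_lt hn hB hAB r, h.sum_snd_lt hn hB hAB r⟩⟩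
  obtain ⟨j, rfl⟩ := Nat.exists_eq_add_of_le' hi
  exact h.fst_succ_lt_snd_succ hn hB hAB j

end Ordered

/-- For `n ≥ 3` and `1 ≤ a ≤ b`, the sequence
`(a₀,b₀) = (a,b)`, `(a_{i+1},b_{i+1}) = (n·b_i − a_i, (n²−1)·b_i − n·a_i)`
(i.e. `(a_i,b_i) = (a,b)·(Φ⁻¹)^i`) satisfies:
(1) `a < a_i` and `b < b_i` for all `i ≥ 1`;
(2) `a_i < b_i` for all `i ≥ 1`;
(3) `Σ_{i=0}^{r} a_i < a_{r+1}` and `Σ_{i=0}^{r} b_i < b_{r+1}` for all `r ≥ 0`. -/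
theorem stmt0 (n : ℤ) (hn : 3 ≤ n) (a b : ℤ) (ha : 1 ≤ a) (hab : a ≤ b)
    (A B : ℕ → ℤ) (hA0 : A 0 = a) (hB0 : B 0 = b)
    (hrec : ∀ i : ℕ, A (i + 1) = n * B i - A i ∧
      B (i + 1) = (n ^ 2 - 1) * B i - n * A i) :
    (∀ i : ℕ, 1 ≤ i → a < A i ∧ b < B i) ∧
    (∀ i : ℕ, 1 ≤ i → A i < B i) ∧
    (∀ r : ℕ, (∑ i ∈ Finset.range (r + 1), A i) < A (r + 1) ∧
      (∑ i ∈ Finset.range (r + 1), B i) < B (r + 1)) := by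
  subst hA0 hB0
  exact stmt0_general hn (by linarith) (by nlinarith) hrec
end

section
/- Let n ≥ 3 be an integer, let c be an integer with 1 ≤ c ≤ n − 1, let i ≥ 1, and let (a,b) = (1,c)·(Φ⁻¹)^i, where Φ⁻¹ = [[−1, −n], [n, n²−1]] acts on row vectors on the right. Then 0 < −q(a,b) < (n+1)·a − b, where q(a,b) = a² + b² − n·a·b. -/
/-!
Both sides of the upper bound are values of the Euler form `⟨·, ·⟩` of the Kronecker quiver:
`q p = ⟨p, p⟩` and `(n + 1) a - b = ⟨(a, b), (1, -1)⟩`. The defining property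
`⟨p Φ⁻¹, r⟩ = -⟨r, p⟩` of the Coxeter transformation shows that `Φ⁻¹` is an isometry, so `q` keeps
the value `q (1, c) < 0` along the orbit, while `⟨·, (1, -1)⟩` does not decrease along it,
because `Φ⁻¹` preserves the cone `0 ≤ x ≤ y`. This reduces the upper bound to `i = 1`, where it says
`0 < ⟨(1, c) - (1, -1), (1, c)⟩ = c (c + 1)`.
-/

/-- Right action of the inverse Coxeter matrix `Φ⁻¹ = [[−1, −n], [n, n²−1]]`
of the `n`-Kronecker quiver on an integer row vector:
`(x,y)·Φ⁻¹ = (n·y − x, (n²−1)·y − n·x)`. -/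
def phiInv (n : ℤ) (p : ℤ × ℤ) : ℤ × ℤ :=
  (n * p.2 - p.1, (n ^ 2 - 1) * p.2 - n * p.1)

/-- The Euler form of the `n`-Kronecker quiver on dimension vectors, with the arrows going from the
first vertex to the second; its diagonal is the Tits form. -/
def eulerForm (n : ℤ) (p r : ℤ × ℤ) : ℤ :=
  p.1 * r.1 + p.2 * r.2 - n * p.1 * r.2

/-- The cone of vectors `0 ≤ x ≤ y`, on which pairing with `(1, -1)` does not decrease under
`phiInv`. -/
def ascendingCone : Set (ℤ × ℤ) :=
  {p | 0 ≤ p.1 ∧ p.1 ≤ p.2}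

section EulerForm

variable (n : ℤ) (p r : ℤ × ℤ)

theorem eulerForm_self : eulerForm n p p = p.1 ^ 2 + p.2 ^ 2 - n * p.1 * p.2 := by
  simp only [eulerForm]
  ring

theorem eulerForm_one_neg_one : eulerForm n p (1, -1) = (n + 1) * p.1 - p.2 := by
  simp only [eulerForm]
  ring

theorem eulerForm_phiInv_left : eulerForm n (phiInv n p) r = -eulerForm n r p := by
  simp only [eulerForm, phiInv]
  ring

theorem eulerForm_phiInv_phiInv :
    eulerForm n (phiInv n p) (phiInv n r) = eulerForm n p r := by
  rw [eulerForm_phiInv_left, eulerForm_phiInv_left, neg_neg]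

theorem eulerForm_iterate_phiInv (i : ℕ) :
    eulerForm n ((phiInv n)^[i] p) ((phiInv n)^[i] r) = eulerForm n p r := by
  induction i with
  | zero => rfl
  | succ k ih => rw [Function.iterate_succ_apply', Function.iterate_succ_apply',
      eulerForm_phiInv_phiInv, ih]

end EulerForm

section Monotonicity

variable {n : ℤ} {p : ℤ × ℤ}

theorem mapsTo_phiInv_ascendingCone (hn : 2 ≤ n) :
    Set.MapsTo (phiInv n) ascendingCone ascendingCone := by
  rintro ⟨x, y⟩ ⟨hx : 0 ≤ x, hxy : x ≤ y⟩
  have hy : 0 ≤ y := hx.trans hxy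
  constructor
  · calc
      0 ≤ (n - 1) * y + (y - x) :=
        add_nonneg (mul_nonneg (by linarith) hy) (sub_nonneg.2 hxy)
      _ = n * y - x := by ring
  · rw [← sub_nonneg]
    calc
      0 ≤ n * (n - 2) * y + (n - 1) * (y - x) :=
        add_nonneg (mul_nonneg (mul_nonneg (by linarith) (by linarith)) hy)
          (mul_nonneg (by linarith) (sub_nonneg.2 hxy))
      _ = (n ^ 2 - 1) * y - n * x - (n * y - x) := by ring

theorem eulerForm_one_neg_one_le_phiInv (hn : -2 ≤ n) (hp : p.1 ≤ p.2) :
    eulerForm n p (1, -1) ≤ eulerForm n (phiInv n p) (1, -1) := by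
  have increment : eulerForm n (phiInv n p) (1, -1) - eulerForm n p (1, -1) =
      (n + 2) * (p.2 - p.1) := by
    simp only [eulerForm, phiInv]
    ring
  rw [← sub_nonneg, increment]
  exact mul_nonneg (by linarith) (sub_nonneg.2 hp)

theorem monotone_eulerForm_iterate_phiInv (hn : 2 ≤ n) (hp : p ∈ ascendingCone) :
    Monotone fun i : ℕ => eulerForm n ((phiInv n)^[i] p) (1, -1) := by
  refine monotone_nat_of_le_succ fun i => ?_
  rw [Function.iterate_succ_apply']
  exact eulerForm_one_neg_one_le_phiInv (by linarith)
    ((mapsTo_phiInv_ascendingCone hn).iterate i hp).2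

end Monotonicity

section InitialVector

variable {n c : ℤ}

theorem eulerForm_one_self_neg (hn : 3 ≤ n) (hc1 : 1 ≤ c) (hc2 : c ≤ n - 1) :
    eulerForm n (1, c) (1, c) < 0 := by
  have factored : eulerForm n (1, c) (1, c) = -((c - 1) * (n - 1 - c)) - (n - 2) := by
    simp only [eulerForm]
    ring
  have product_nonneg : 0 ≤ (c - 1) * (n - 1 - c) :=
    mul_nonneg (sub_nonneg.2 hc1) (sub_nonneg.2 hc2)
  linarith

theorem neg_eulerForm_one_self_lt_phiInv (n : ℤ) (hc : 0 < c) :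
    -eulerForm n (1, c) (1, c) < eulerForm n (phiInv n (1, c)) (1, -1) := by
  have difference : eulerForm n (1, c) (1, c) - eulerForm n (1, -1) (1, c) = c * (c + 1) := by
    simp only [eulerForm]
    ring
  have product_pos : 0 < c * (c + 1) := by positivity
  rw [eulerForm_phiInv_left]
  linarith

theorem neg_eulerForm_one_self_lt_iterate_phiInv (hn : 2 ≤ n) (hc : 1 ≤ c) {i : ℕ} (hi : 1 ≤ i) :
    -eulerForm n (1, c) (1, c) < eulerForm n ((phiInv n)^[i] (1, c)) (1, -1) :=
  (neg_eulerForm_one_self_lt_phiInv n (by linarith)).trans_le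
    (monotone_eulerForm_iterate_phiInv hn ⟨zero_le_one, hc⟩ hi)

end InitialVector

/-- For `n ≥ 3`, `1 ≤ c ≤ n−1`, `i ≥ 1` and
`(a,b) = (1,c)·(Φ⁻¹)^i`, one has `0 < −q(a,b) < (n+1)·a − b`, where
`q(a,b) = a² + b² − n·a·b`. -/
theorem stmt3 (n c : ℤ) (hn : 3 ≤ n) (hc1 : 1 ≤ c) (hc2 : c ≤ n - 1)
    (i : ℕ) (hi : 1 ≤ i) (a b : ℤ) (hab : (a, b) = (phiInv n)^[i] (1, c)) :
    0 < -(a ^ 2 + b ^ 2 - n * a * b) ∧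
    -(a ^ 2 + b ^ 2 - n * a * b) < (n + 1) * a - b := by
  have tits_eq : a ^ 2 + b ^ 2 - n * a * b = eulerForm n (1, c) (1, c) := by
    rw [← eulerForm_iterate_phiInv n (1, c) (1, c) i, ← hab, eulerForm_self]
  have functional_eq : (n + 1) * a - b = eulerForm n ((phiInv n)^[i] (1, c)) (1, -1) := by
    rw [← hab, eulerForm_one_neg_one]
  rw [tits_eq, functional_eq]
  exact ⟨neg_pos.2 (eulerForm_one_self_neg hn hc1 hc2),
    neg_eulerForm_one_self_lt_iterate_phiInv (by linarith) hc1 hi⟩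
end

section
/- Let n ≥ 3 be an integer and let a, b be integers with 1 < a ≤ b and q(a,b) ≤ 1 (the latter holds for the dimension vector of any indecomposable representation). If the pair (a−1, b+1) is not an imaginary root, i.e., q(a−1, b+1) ≥ 0, then for every integer t with 1 ≤ t ≤ n·b − a − 1, the pair (n·b − a − t, (n²−1)·b − n·a + t) is not an imaginary root either, i.e., q(n·b − a − t, (n²−1)·b − n·a + t) ≥ 0. -/
/-!
The inverse Coxeter transformation `Φ⁻¹` is the square of `(x, y) ↦ (y, n·y − x)`, the effect on
dimension vectors of a reflection functor followed by exchanging the two vertices. This map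
preserves the Tits form and, for `n ≥ 2` and `y ≥ 0`, does not decrease the gap `y − x`. Moving from
`(x, y)` to `(x − t, y + t)` changes the form by `(n + 2)·t·(y − x + t)`, an amount that grows with
both `t ≥ 1` and a nonnegative gap. So each application of the map can only raise the value of the
form at the moved pair above its value at `(x − 1, y + 1)`.
-/

section CommRing

variable {R : Type*} [CommRing R]

/-- The Tits form of the `n`-Kronecker quiver, whose negative values at positive integer pairs
single out the imaginary roots. The number of arrows and the coordinates are allowed to lie in any
commutative ring, because only ring identities and order properties of the form are used. -/
def titsForm (n x y : R) : R :=
  x ^ 2 + y ^ 2 - n * x * y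

theorem titsForm_reflect (n x y : R) : titsForm n y (n * y - x) = titsForm n x y := by
  unfold titsForm
  ring

theorem titsForm_sub_add (n x y t : R) :
    titsForm n (x - t) (y + t) = titsForm n x y + (n + 2) * (t * (y - x + t)) := by
  unfold titsForm
  ring

end CommRing

section OrderedRing

variable {R : Type*} [CommRing R] [PartialOrder R] [IsOrderedRing R] {n x y t : R}

theorem sub_le_reflect_sub (hn : 2 ≤ n) (hy : 0 ≤ y) : y - x ≤ n * y - x - y := by
  have hgrowth : 0 ≤ (n - 2) * y := mul_nonneg (sub_nonneg.2 hn) hy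
  calc y - x ≤ y - x + (n - 2) * y := le_add_of_nonneg_right hgrowth
    _ = n * y - x - y := by ring

theorem le_reflect (hn : 2 ≤ n) (hy : 0 ≤ y) (hxy : x ≤ y) : y ≤ n * y - x :=
  sub_nonneg.1 ((sub_nonneg.2 hxy).trans (sub_le_reflect_sub hn hy))

theorem titsForm_sub_one_add_one_le_reflect (hn : 2 ≤ n) (hy : 0 ≤ y) (hxy : x ≤ y)
    (ht : 1 ≤ t) :
    titsForm n (x - 1) (y + 1) ≤ titsForm n (y - t) (n * y - x + t) := by
  have hgap : y - x + 1 ≤ n * y - x - y + t := add_le_add (sub_le_reflect_sub hn hy) ht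
  have hgap_nonneg : 0 ≤ y - x + 1 := add_nonneg (sub_nonneg.2 hxy) zero_le_one
  have hmove : 1 * (y - x + 1) ≤ t * (n * y - x - y + t) :=
    mul_le_mul ht hgap hgap_nonneg (zero_le_one.trans ht)
  have hcoeff : 0 ≤ n + 2 := add_nonneg (zero_le_two.trans hn) zero_le_two
  rw [titsForm_sub_add, titsForm_sub_add, titsForm_reflect]
  gcongr

theorem stmt5_general {a b : R} (hn : 2 ≤ n) (hb : 0 ≤ b) (hab : a ≤ b) (ht : 1 ≤ t) :
    titsForm n (a - 1) (b + 1) ≤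
      titsForm n (n * b - a - t) ((n ^ 2 - 1) * b - n * a + t) := by
  have hle : b ≤ n * b - a := le_reflect hn hb hab
  calc titsForm n (a - 1) (b + 1)
      ≤ titsForm n (b - 1) (n * b - a + 1) :=
        titsForm_sub_one_add_one_le_reflect hn hb hab le_rfl
    _ ≤ titsForm n (n * b - a - t) (n * (n * b - a) - b + t) :=
        titsForm_sub_one_add_one_le_reflect hn (hb.trans hle) hle ht
    _ = titsForm n (n * b - a - t) ((n ^ 2 - 1) * b - n * a + t) := by
        congr 1
        ring

end OrderedRing

/-- Let `n ≥ 3` and `1 < a ≤ b` with `q(a,b) ≤ 1` where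
`q(x,y) = x² + y² − n·x·y`. If `(a−1, b+1)` is not an imaginary root,
i.e. `q(a−1, b+1) ≥ 0`, then for every `1 ≤ t ≤ n·b − a − 1` the pair
`(n·b − a − t, (n²−1)·b − n·a + t)` is not an imaginary root either. -/
theorem stmt5 (n a b : ℤ) (hn : 3 ≤ n) (ha : 1 < a) (hab : a ≤ b)
    (hq : a ^ 2 + b ^ 2 - n * a * b ≤ 1)
    (hroot : 0 ≤ (a - 1) ^ 2 + (b + 1) ^ 2 - n * (a - 1) * (b + 1))
    (t : ℤ) (ht1 : 1 ≤ t) (ht2 : t ≤ n * b - a - 1) :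
    0 ≤ (n * b - a - t) ^ 2 + ((n ^ 2 - 1) * b - n * a + t) ^ 2 -
      n * (n * b - a - t) * ((n ^ 2 - 1) * b - n * a + t) :=
  hroot.trans (stmt5_general (by linarith) (by linarith) hab ht1)
end

section
/- Let Φ⁻¹ = [[−1, −3], [3, 8]] (the inverse Coxeter matrix of the 3-Kronecker quiver), acting on integer row vectors on the right. Then for all integers a, b and every integer i ≥ 1, (a, b)·(Φ⁻¹)^i = (F_{4i}·b − F_{4i−2}·a, F_{4i+2}·b − F_{4i}·a), where F_k denotes the k-th Fibonacci number. -/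
/-!
Reflecting a dimension vector of the `3`-Kronecker quiver at a vertex and then swapping the two
vertices gives `(x, y) ↦ (y, 3y − x)`, and `Φ⁻¹` is the square of this map. Iterating the map slides
a window of length two along a solution of `u (n + 2) = 3 * u (n + 1) - u n`. The sequence
`n ↦ F_{2n}` satisfies this recurrence over all of `ℤ`, so the solution with `u 0 = a` and `u 1 = b`
is `u n = F_{2n} b − F_{2n−2} a`, where `F_{−2} = −1` gives the value at `0`.
-/

/-- Right action of the inverse Coxeter matrix `Φ⁻¹ = [[−1, −3], [3, 8]]` of
the `3`-Kronecker quiver on an integer row vector: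
`(x,y)·Φ⁻¹ = (3y − x, 8y − 3x)`. -/
def phiInv3 (p : ℤ × ℤ) : ℤ × ℤ :=
  (3 * p.2 - p.1, 8 * p.2 - 3 * p.1)

/-- The action on dimension vectors of the `m`-Kronecker quiver of the reflection at one vertex
followed by the interchange of the two vertices. The interchange returns the reflected quiver to
its original orientation, so that this map can be iterated to reach `Φ⁻¹`. -/
def kroneckerReflection (m : ℤ) (p : ℤ × ℤ) : ℤ × ℤ :=
  (p.2, m * p.2 - p.1)

theorem phiInv3_eq_kroneckerReflection_iterate_two : phiInv3 = (kroneckerReflection 3)^[2] := by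
  ext p
  · rfl
  · simp only [phiInv3, Function.iterate_succ, Function.iterate_zero, Function.comp_apply, id_eq,
      kroneckerReflection]
    ring

theorem iterate_pair_of_recurrence {α : Type*} {g : α → α → α} {u : ℕ → α}
    (hu : ∀ n, u (n + 2) = g (u n) (u (n + 1))) (n : ℕ) :
    (fun p : α × α ↦ (p.2, g p.1 p.2))^[n] (u 0, u 1) = (u n, u (n + 1)) := by
  induction n with
  | zero => rfl
  | succ n ih => rw [Function.iterate_succ_apply', ih, ← hu]

theorem intFib_add_two_eq_three_mul_sub (n : ℤ) :
    Int.fib (n + 2) = 3 * Int.fib n - Int.fib (n - 2) := by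
  have h₀ : Int.fib n = Int.fib (n - 2) + Int.fib (n - 1) := by
    convert Int.fib_add_two (n - 2) using 3 <;> ring
  have h₁ : Int.fib (n + 1) = Int.fib (n - 1) + Int.fib n := by
    rw [show n + 1 = n - 1 + 2 by ring, Int.fib_add_two, sub_add_cancel]
  have h₂ : Int.fib (n + 2) = Int.fib n + Int.fib (n + 1) := Int.fib_add_two n
  linarith

theorem kroneckerReflection_three_iterate (a b : ℤ) (n : ℕ) :
    (kroneckerReflection 3)^[n] (a, b) =
      (Int.fib (2 * n) * b - Int.fib (2 * n - 2) * a,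
       Int.fib (2 * n + 2) * b - Int.fib (2 * n) * a) := by
  let u : ℕ → ℤ := fun n ↦ Int.fib (2 * n) * b - Int.fib (2 * n - 2) * a
  have u_zero : u 0 = a := by simp [u]
  have u_succ (n : ℕ) : u (n + 1) = Int.fib (2 * n + 2) * b - Int.fib (2 * n) * a := by
    simp only [u, Nat.cast_add_one, mul_add_one, add_sub_cancel_right]
  have u_one : u 1 = b := by simpa using u_succ 0
  have u_rec (n : ℕ) : u (n + 2) = 3 * u (n + 1) - u n := by
    have hb : Int.fib (2 * n + 2 + 2) = 3 * Int.fib (2 * n + 2) - Int.fib (2 * n) := by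
      simpa only [add_sub_cancel_right] using intFib_add_two_eq_three_mul_sub (2 * n + 2)
    have ha : Int.fib (2 * n + 2) = 3 * Int.fib (2 * n) - Int.fib (2 * n - 2) :=
      intFib_add_two_eq_three_mul_sub (2 * n)
    simp only [u_succ, Nat.cast_add_one, mul_add_one, u]
    linear_combination b * hb - a * ha
  calc
    (kroneckerReflection 3)^[n] (a, b) = (kroneckerReflection 3)^[n] (u 0, u 1) := by
      rw [u_zero, u_one]
    _ = (u n, u (n + 1)) := iterate_pair_of_recurrence (g := fun x y ↦ 3 * y - x) u_rec n
    _ = _ := by rw [u_succ]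

theorem phiInv3_iterate (a b : ℤ) (i : ℕ) :
    phiInv3^[i] (a, b) =
      (Int.fib (4 * i) * b - Int.fib (4 * i - 2) * a,
       Int.fib (4 * i + 2) * b - Int.fib (4 * i) * a) := by
  have index_eq : (2 : ℤ) * ((2 * i : ℕ) : ℤ) = 4 * i := by push_cast; ring
  rw [phiInv3_eq_kroneckerReflection_iterate_two, ← Function.iterate_mul,
    kroneckerReflection_three_iterate, index_eq]

/-- For all integers `a, b` and every `i ≥ 1`,
`(a,b)·(Φ⁻¹)^i = (F_{4i}·b − F_{4i−2}·a, F_{4i+2}·b − F_{4i}·a)`. -/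
theorem stmt8 (a b : ℤ) (i : ℕ) (hi : 1 ≤ i) :
    phiInv3^[i] (a, b) =
      ((Nat.fib (4 * i) : ℤ) * b - (Nat.fib (4 * i - 2) : ℤ) * a,
       (Nat.fib (4 * i + 2) : ℤ) * b - (Nat.fib (4 * i) : ℤ) * a) := by
  have cast_sub : ((4 * i - 2 : ℕ) : ℤ) = 4 * i - 2 := by omega
  simp only [← Int.fib_natCast, cast_sub, Nat.cast_add, Nat.cast_mul, Nat.cast_ofNat]
  exact phiInv3_iterate a b i
end

section
/- Let Φ = [[8, 3], [−3, −1]] and Φ⁻¹ = [[−1, −3], [3, 8]], acting on integer row vectors on the right. Then for every positive integer m and every integer i ≥ 1: (m, m)·Φ^i = (m·F_{4i+1}, m·F_{4i−1}) and (m, m)·(Φ⁻¹)^i = (m·F_{4i−1}, m·F_{4i+1}), where F_k denotes the k-th Fibonacci number. -/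
/-!
Extend the Fibonacci numbers to all integer indices, so that `F₁ = F₋₁ = 1` and
`(m, m) = (m F₁, m F₋₁)`. For every sequence `u` satisfying the Fibonacci recurrence, `Φ` sends
`(uₙ₊₂, uₙ)` to the same pair with `n` replaced by `n + 4`: the eigenvalues of `Φ` are the fourth
powers of those of the recurrence. Interchanging the two coordinates conjugates `Φ` to `Φ⁻¹`.
-/

/-- Right action of the Coxeter matrix `Φ = [[8, 3], [−3, −1]]` of the
`3`-Kronecker quiver on an integer row vector: `(x,y)·Φ = (8x − 3y, 3x − y)`. -/
def phi3 (p : ℤ × ℤ) : ℤ × ℤ :=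
  (8 * p.1 - 3 * p.2, 3 * p.1 - p.2)

theorem add_four_of_fib_recurrence {G : Type*} [AddCommGroup G] {u : ℤ → G}
    (hu : ∀ n, u (n + 2) = u n + u (n + 1)) (n : ℤ) :
    u (n + 4) = 3 • u (n + 2) - u n := by
  have h₃ : u (n + 3) = u (n + 1) + u (n + 2) := by
    simpa only [add_assoc, Int.reduceAdd] using hu (n + 1)
  have h₄ : u (n + 4) = u (n + 2) + u (n + 3) := by
    simpa only [add_assoc, Int.reduceAdd] using hu (n + 2)
  rw [h₄, h₃, hu n]
  abel

theorem semiconj_add_four_phi3 {u : ℤ → ℤ} (hu : ∀ n, u (n + 2) = u n + u (n + 1)) :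
    Function.Semiconj (fun n ↦ (u (n + 2), u n)) (· + 4) phi3 := by
  intro n
  have snd_eq : u (n + 4) = 3 * u (n + 2) - u n := add_four_of_fib_recurrence hu n
  have fst_eq : u (n + 4 + 2) = 8 * u (n + 2) - 3 * u n :=
    calc u (n + 4 + 2) = 3 * u (n + 4) - u (n + 2) := by
          simpa [add_assoc] using add_four_of_fib_recurrence hu (n + 2)
      _ = 8 * u (n + 2) - 3 * u n := by rw [snd_eq]; ring
  exact Prod.ext fst_eq snd_eq

theorem phi3_iterate_of_fib_recurrence {u : ℤ → ℤ} (hu : ∀ n, u (n + 2) = u n + u (n + 1))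
    (n : ℤ) (i : ℕ) :
    phi3^[i] (u (n + 2), u n) = (u (n + 4 * i + 2), u (n + 4 * i)) := by
  have h := (semiconj_add_four_phi3 hu).iterate_right i n
  rw [add_right_iterate, nsmul_eq_mul, mul_comm] at h
  exact h.symm

theorem semiconj_swap_phi3_phiInv3 : Function.Semiconj Prod.swap phi3 phiInv3 :=
  fun _ ↦ Prod.ext rfl rfl

theorem phiInv3_iterate_swap (i : ℕ) (p : ℤ × ℤ) :
    phiInv3^[i] p.swap = (phi3^[i] p).swap :=
  (semiconj_swap_phi3_phiInv3.iterate_right i p).symm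

theorem stmt9_general (m : ℤ) (i : ℕ) :
    phi3^[i] (m, m) = (m * Int.fib (4 * i + 1), m * Int.fib (4 * i - 1)) ∧
    phiInv3^[i] (m, m) = (m * Int.fib (4 * i - 1), m * Int.fib (4 * i + 1)) := by
  have recurrence (n : ℤ) : m * Int.fib (n + 2) = m * Int.fib n + m * Int.fib (n + 1) := by
    rw [Int.fib_add_two, mul_add]
  have phi3_eq : phi3^[i] (m, m) = (m * Int.fib (4 * i + 1), m * Int.fib (4 * i - 1)) := by
    convert phi3_iterate_of_fib_recurrence (u := fun n ↦ m * Int.fib n) recurrence (-1) i using 4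
    · simp
    · simp
    · ring_nf
    · ring_nf
  exact ⟨phi3_eq, by simpa only [phi3_eq, Prod.swap_prod_mk] using phiInv3_iterate_swap i (m, m)⟩

/-- For every positive integer `m` and every `i ≥ 1`,
`(m,m)·Φ^i = (m·F_{4i+1}, m·F_{4i−1})` and
`(m,m)·(Φ⁻¹)^i = (m·F_{4i−1}, m·F_{4i+1})`. -/
theorem stmt9 (m : ℤ) (hm : 0 < m) (i : ℕ) (hi : 1 ≤ i) :
    phi3^[i] (m, m) =
      (m * (Nat.fib (4 * i + 1) : ℤ), m * (Nat.fib (4 * i - 1) : ℤ)) ∧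
    phiInv3^[i] (m, m) =
      (m * (Nat.fib (4 * i - 1) : ℤ), m * (Nat.fib (4 * i + 1) : ℤ)) := by
  simpa only [← Int.fib_natCast, Nat.cast_sub (show 1 ≤ 4 * i by lia), Nat.cast_add, Nat.cast_mul,
    Nat.cast_ofNat, Nat.cast_one] using stmt9_general m i
end

section
/- Let Φ = [[8, 3], [−3, −1]] and Φ⁻¹ = [[−1, −3], [3, 8]], acting on integer row vectors on the right. Then for every positive integer m and every integer i ≥ 0: (m, 2m)·Φ^{i+1} = (m·F_{4i+3}, m·F_{4i+1}) and (m, 2m)·(Φ⁻¹)^i = (m·F_{4i+1}, m·F_{4i+3}), where F_k denotes the k-th Fibonacci number. -/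
/-!
Since `F_{n+4} = 3 F_{n+2} - F_n`, the matrix `Φ⁻¹` maps `(m F_n, m F_{n+2})` to
`(m F_{n+4}, m F_{n+6})`, and `(m, 2m)` is such a pair with `n = 1`. Swapping coordinates conjugates
`Φ⁻¹` into `Φ`, and one application of `Φ` to `(m, 2m)` just swaps its coordinates, so the orbit
under `Φ` is the swapped orbit under `Φ⁻¹`, delayed by one step.
-/

theorem fib_add_four_add_fib (n : ℕ) :
    Nat.fib (n + 4) + Nat.fib n = 3 * Nat.fib (n + 2) := by
  have h₂ : Nat.fib (n + 2) = Nat.fib n + Nat.fib (n + 1) := Nat.fib_add_two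
  have h₃ : Nat.fib (n + 3) = Nat.fib (n + 1) + Nat.fib (n + 2) := Nat.fib_add_two
  have h₄ : Nat.fib (n + 4) = Nat.fib (n + 2) + Nat.fib (n + 3) := Nat.fib_add_two
  lia

/-- The row vector `(m F_n, m F_{n+2})`; the vectors `fibPair m (4 * i + 1)` make up the forward
`Φ⁻¹`-orbit of `(m, 2m)`. -/
def fibPair (m : ℤ) (n : ℕ) : ℤ × ℤ :=
  (m * Nat.fib n, m * Nat.fib (n + 2))

theorem fibPair_one (m : ℤ) : fibPair m 1 = (m, 2 * m) := by
  simp [fibPair, Nat.fib_add_two, mul_comm]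

theorem phiInv3_fibPair (m : ℤ) (n : ℕ) : phiInv3 (fibPair m n) = fibPair m (n + 4) := by
  have h₄ : (Nat.fib (n + 4) + Nat.fib n : ℤ) = 3 * Nat.fib (n + 2) :=
    mod_cast fib_add_four_add_fib n
  have h₆ : (Nat.fib (n + 6) + Nat.fib (n + 2) : ℤ) = 3 * Nat.fib (n + 4) :=
    mod_cast fib_add_four_add_fib (n + 2)
  ext <;> dsimp only [phiInv3, fibPair]
  · linear_combination -m * h₄
  · linear_combination -3 * m * h₄ - m * h₆

theorem phiInv3_iterate_fibPair (m : ℤ) (n i : ℕ) :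
    phiInv3^[i] (fibPair m n) = fibPair m (4 * i + n) := by
  induction i with
  | zero => rw [Function.iterate_zero_apply, mul_zero, zero_add]
  | succ i ih =>
    rw [Function.iterate_succ_apply', ih, phiInv3_fibPair, mul_add_one, add_right_comm]

theorem semiconj_swap_phiInv3_phi3 : Function.Semiconj Prod.swap phiInv3 phi3 :=
  fun _ => rfl

theorem phi3_mul_two (m : ℤ) : phi3 (m, 2 * m) = (m, 2 * m).swap := by
  ext <;> dsimp only [phi3, Prod.swap] <;> ring

theorem phiInv3_iterate_mul_two (m : ℤ) (i : ℕ) :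
    phiInv3^[i] (m, 2 * m) = fibPair m (4 * i + 1) := by
  rw [← fibPair_one, phiInv3_iterate_fibPair]

theorem phi3_iterate_succ_mul_two (m : ℤ) (i : ℕ) :
    phi3^[i + 1] (m, 2 * m) = (fibPair m (4 * i + 1)).swap :=
  calc phi3^[i + 1] (m, 2 * m)
      = phi3^[i] (m, 2 * m).swap := by rw [Function.iterate_succ_apply, phi3_mul_two]
    _ = (phiInv3^[i] (m, 2 * m)).swap :=
        ((semiconj_swap_phiInv3_phi3.iterate_right i).eq _).symm
    _ = (fibPair m (4 * i + 1)).swap := by rw [phiInv3_iterate_mul_two]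

/-- For every positive integer `m` and every `i ≥ 0`,
`(m,2m)·Φ^{i+1} = (m·F_{4i+3}, m·F_{4i+1})` and
`(m,2m)·(Φ⁻¹)^i = (m·F_{4i+1}, m·F_{4i+3})`. -/
theorem stmt10 (m : ℤ) (hm : 0 < m) (i : ℕ) :
    phi3^[i + 1] (m, 2 * m) =
      (m * (Nat.fib (4 * i + 3) : ℤ), m * (Nat.fib (4 * i + 1) : ℤ)) ∧
    phiInv3^[i] (m, 2 * m) =
      (m * (Nat.fib (4 * i + 1) : ℤ), m * (Nat.fib (4 * i + 3) : ℤ)) :=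
  ⟨phi3_iterate_succ_mul_two m i, phiInv3_iterate_mul_two m i⟩
end

section
/- Let n ≥ 2 be an even integer. Then for every integer i ≥ 0 the inequalities F_{2n}·F_{4i+1} < F_{2n+4i+3} and F_{2n}·F_{4i+3} < F_{2n+4i+5} hold, where F_k denotes the k-th Fibonacci number. -/
theorem fib_mul_fib_lt_fib_add_add_one (m k : ℕ) :
    Nat.fib m * Nat.fib k < Nat.fib (m + k + 1) := by
  have cross_term_pos : 0 < Nat.fib (m + 1) * Nat.fib (k + 1) :=
    Nat.mul_pos (Nat.fib_pos.2 m.succ_pos) (Nat.fib_pos.2 k.succ_pos)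
  calc Nat.fib m * Nat.fib k
      < Nat.fib m * Nat.fib k + Nat.fib (m + 1) * Nat.fib (k + 1) :=
        Nat.lt_add_of_pos_right cross_term_pos
    _ = Nat.fib (m + k + 1) := (Nat.fib_add m k).symm

theorem stmt13_general (n i : ℕ) :
    Nat.fib (2 * n) * Nat.fib (4 * i + 1) < Nat.fib (2 * n + 4 * i + 3) ∧
    Nat.fib (2 * n) * Nat.fib (4 * i + 3) < Nat.fib (2 * n + 4 * i + 5) :=
  ⟨(fib_mul_fib_lt_fib_add_add_one (2 * n) (4 * i + 1)).trans_le Nat.fib_le_fib_succ,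
    (fib_mul_fib_lt_fib_add_add_one (2 * n) (4 * i + 3)).trans_le Nat.fib_le_fib_succ⟩

/-- For even `n ≥ 2` and every `i ≥ 0`,
`F_{2n}·F_{4i+1} < F_{2n+4i+3}` and `F_{2n}·F_{4i+3} < F_{2n+4i+5}`. -/
theorem stmt13 (n : ℕ) (hn : 2 ≤ n) (heven : Even n) (i : ℕ) :
    Nat.fib (2 * n) * Nat.fib (4 * i + 1) < Nat.fib (2 * n + 4 * i + 3) ∧
    Nat.fib (2 * n) * Nat.fib (4 * i + 3) < Nat.fib (2 * n + 4 * i + 5) :=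
  stmt13_general n i
end

section
/- Let φ = (1+√5)/2 be the golden ratio. Then for all integers n ≥ 1 and i ≥ 1, the inequality 3·F_{2n}·(F_{4i−1} + F_{4i+1}) < (3 − φ)·F_{2n+2}·F_{4i+3} holds as real numbers, where F_k denotes the k-th Fibonacci number. -/
/-!
Since `φ < 2`, the factor `3 - φ` exceeds `1`, so the claim follows from the inequality
`3 * F_m * (F_k + F_{k+2}) ≤ F_{m+2} * F_{k+4}` between natural numbers. That inequality is the
product of the two ratio bounds `F_m / F_{m+2} ≤ 1 / 2` and `(F_k + F_{k+2}) / F_{k+4} ≤ 2 / 3`,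
both of which reduce to `F_j ≤ F_{j+1}` once the recurrence is unfolded.
-/

theorem two_mul_fib_le_fib_add_two (m : ℕ) : 2 * Nat.fib m ≤ Nat.fib (m + 2) :=
  calc
    2 * Nat.fib m = Nat.fib m + Nat.fib m := two_mul _
    _ ≤ Nat.fib m + Nat.fib (m + 1) := Nat.add_le_add_left Nat.fib_le_fib_succ _
    _ = Nat.fib (m + 2) := Nat.fib_add_two.symm

theorem fib_add_four (k : ℕ) : Nat.fib (k + 4) = 2 * Nat.fib k + 3 * Nat.fib (k + 1) := by
  simp only [Nat.fib_add_two]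
  ring

theorem three_mul_fib_add_fib_add_two_le (k : ℕ) :
    3 * (Nat.fib k + Nat.fib (k + 2)) ≤ 2 * Nat.fib (k + 4) := by
  have hmono : Nat.fib k ≤ Nat.fib (k + 1) := Nat.fib_le_fib_succ
  rw [fib_add_four, Nat.fib_add_two]
  linarith

theorem three_mul_fib_mul_fib_add_fib_add_two_le (m k : ℕ) :
    3 * Nat.fib m * (Nat.fib k + Nat.fib (k + 2)) ≤ Nat.fib (m + 2) * Nat.fib (k + 4) :=
  calc
    3 * Nat.fib m * (Nat.fib k + Nat.fib (k + 2))
      = Nat.fib m * (3 * (Nat.fib k + Nat.fib (k + 2))) := by ring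
    _ ≤ Nat.fib m * (2 * Nat.fib (k + 4)) :=
        Nat.mul_le_mul_left _ (three_mul_fib_add_fib_add_two_le k)
    _ = 2 * Nat.fib m * Nat.fib (k + 4) := by ring
    _ ≤ Nat.fib (m + 2) * Nat.fib (k + 4) :=
        Nat.mul_le_mul_right _ (two_mul_fib_le_fib_add_two m)

theorem stmt17_general (φ : ℝ) (hφ : φ = (1 + Real.sqrt 5) / 2) (m k : ℕ) :
    3 * (Nat.fib m : ℝ) * ((Nat.fib k : ℝ) + (Nat.fib (k + 2) : ℝ)) <
      (3 - φ) * (Nat.fib (m + 2) : ℝ) * (Nat.fib (k + 4) : ℝ) := by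
  have one_lt_three_sub : 1 < 3 - φ := by
    have : φ < 2 := hφ ▸ Real.goldenRatio_lt_two
    linarith
  have fib_mul_fib_pos : (0 : ℝ) < Nat.fib (m + 2) * Nat.fib (k + 4) := by
    exact_mod_cast Nat.mul_pos (Nat.fib_pos.2 (by simp)) (Nat.fib_pos.2 (by simp))
  calc
    3 * (Nat.fib m : ℝ) * (Nat.fib k + Nat.fib (k + 2))
      ≤ Nat.fib (m + 2) * Nat.fib (k + 4) := by
        exact_mod_cast three_mul_fib_mul_fib_add_fib_add_two_le m k
    _ < (3 - φ) * (Nat.fib (m + 2) * Nat.fib (k + 4)) :=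
        lt_mul_of_one_lt_left fib_mul_fib_pos one_lt_three_sub
    _ = (3 - φ) * Nat.fib (m + 2) * Nat.fib (k + 4) := (mul_assoc ..).symm

/-- With `φ = (1+√5)/2` the golden ratio, for all `n ≥ 1` and
`i ≥ 1`, `3·F_{2n}·(F_{4i−1} + F_{4i+1}) < (3 − φ)·F_{2n+2}·F_{4i+3}`
as real numbers. -/
theorem stmt17 (φ : ℝ) (hφ : φ = (1 + Real.sqrt 5) / 2)
    (n i : ℕ) (hn : 1 ≤ n) (hi : 1 ≤ i) :
    3 * (Nat.fib (2 * n) : ℝ) *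
        ((Nat.fib (4 * i - 1) : ℝ) + (Nat.fib (4 * i + 1) : ℝ)) <
      (3 - φ) * (Nat.fib (2 * n + 2) : ℝ) * (Nat.fib (4 * i + 3) : ℝ) := by
  obtain ⟨j, rfl⟩ := Nat.exists_eq_add_of_le' hi
  exact stmt17_general φ hφ (2 * n) (4 * j + 3)
end
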